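/- arXiv:2003.03656 — 2 statements merged into one kernel-verified Lean document; each statement's English description precedes it below -/
import Mathlib

section
/- For every δ > 0 there exist constants c, C > 0 and q₀ such that for every prime power q ≥ q₀ there exists a set P ⊆ F² with |P| ≥ c · q^{2/3} satisfying: (i) P contains no four distinct collinear points; (ii) a(P) ≤ |P|^{3/4 + δ}; (iii) T(P) ≤ C · |P|^{3/2}. -/
/-!
The set `P` is obtained by deletion from a random subset of `F²` in which every point is kept with
probability `p = q^{-4/3} / 2`. Such a subset has about `q^{2/3} / 2` points, at most `q^6 p^4`
collinear quadruples and at most `q^5 p^3` collinear triples in expectation. With this choice of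
`p` the quadruples can be destroyed by removing at most half of the points, and the triples number
`O(q)`, which is `O(|P|^{3/2})`.

For the arcs, the expected number of arcs of size `m ≈ q^{1/2} log q` in the random set has to be
tiny, i.e. `F²` must have few arcs of size `m`. An arc of size `s + k` is an arc `S` of size `s`
together with a `k`-set that is independent in the graph `G_S` joining two points whenever they are
collinear with a point of `S`. By Cauchy–Schwarz over the `q + 1` directions at each point of `S`,
and because a line meets the arc `S` in at most two points, every set of more than `4q` points
contains a vertex adjacent in `G_S` to a proportion at least `s / (8q)` of the set
(`exists_large_degree`). The Kleitman–Winston argument (`card_independent_le`) then bounds the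
number of independent `k`-sets by `(q² + 1)^t (4q)^k`, where `t` is such that
`(1 - s / (8q))^t q² ≤ 4q`; `t = s ≈ q^{1/2} log q` will do. So there are at most
`(q² + 1)^{2s} (4q)^k` arcs of size `s + k` (`card_arcs_le`), and since `4qp ≤ 2 q^{-1/3}`, taking
`k = 100 s` makes the expected number of such arcs at most `q^{-2}`.
-/

open Finset MeasureTheory
open scoped NNReal ENNReal

/-- A set `P` in the affine plane over `F` is an arc if it contains no three
distinct collinear points. -/
def IsArc (F : Type*) [Field F] (P : Set (F × F)) : Prop :=
  ∀ a ∈ P, ∀ b ∈ P, ∀ c ∈ P,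
    a ≠ b → a ≠ c → b ≠ c → ¬ Collinear F ({a, b, c} : Set (F × F))

/-- `numArcs F k` is the number of `k`-element arcs in `F²`. -/
noncomputable def numArcs (F : Type*) [Field F] [Fintype F] (k : ℕ) : ℕ :=
  Nat.card {s : Finset (F × F) // s.card = k ∧ IsArc F ↑s}

/-- `maxArc F P` is the maximum cardinality of an arc contained in `P`. -/
noncomputable def maxArc (F : Type*) [Field F] (P : Finset (F × F)) : ℕ :=
  sSup {k : ℕ | ∃ s : Finset (F × F), s ⊆ P ∧ s.card = k ∧ IsArc F ↑s}

/-- `numCollinearTriples F P` is the number of 3-element collinear subsets of `P`. -/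
noncomputable def numCollinearTriples (F : Type*) [Field F] (P : Finset (F × F)) : ℕ :=
  Nat.card {s : Finset (F × F) // s ⊆ P ∧ s.card = 3 ∧ Collinear F (↑s : Set (F × F))}

/-- `P` contains no `l` distinct collinear points. -/
def NoLCollinear (F : Type*) [Field F] (l : ℕ) (P : Finset (F × F)) : Prop :=
  ∀ s : Finset (F × F), s ⊆ P → s.card = l → ¬ Collinear F (↑s : Set (F × F))

/-- The product Bernoulli(p) measure on subsets of `F²` (encoded as functions
`F × F → Bool`): each point is included independently with probability `p`. -/
noncomputable def randomMeasure (F : Type*) [Field F] [Fintype F] (p : ℝ≥0) (hp : p ≤ 1) :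
    Measure ((F × F) → Bool) :=
  Measure.pi fun _ => (PMF.bernoulli p (by exact_mod_cast hp)).toMeasure

/-- The subset of `F²` corresponding to an indicator function `Q : F × F → Bool`. -/
noncomputable def toSubset {F : Type*} [Field F] [Fintype F] (Q : (F × F) → Bool) :
    Finset (F × F) := Finset.univ.filter fun x => Q x = true

/-- `L` is an affine line in `F²`, i.e. the affine span of two distinct points. -/
def IsAffineLine (F : Type*) [Field F] (L : Set (F × F)) : Prop :=
  ∃ a b : F × F, a ≠ b ∧ L = (affineSpan F {a, b} : Set (F × F))

section Aux

open scoped Classical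

/-! ### First moments of a random subset -/

/-- A `p`-random subset contains a fixed set `B` with probability `p ^ #B`. The law of the random
subset is written as the explicit weight `p ^ #P * (1 - p) ^ (n - #P)`. -/
lemma sum_weight_superset {V : Type*} [Fintype V] [DecidableEq V] (p : ℝ) (B : Finset V) :
    ∑ P ∈ (univ : Finset (Finset V)) with B ⊆ P,
      p ^ #P * (1 - p) ^ (Fintype.card V - #P) = p ^ #B := by
  have h1 : (univ : Finset (Finset V)).filter (fun P => B ⊆ P)
      = (univ \ B).powerset.image (B ∪ ·) := by
    rw [← Finset.Icc_eq_image_powerset (Finset.subset_univ B)]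
    ext P
    simp
  have hinj : Set.InjOn (B ∪ ·) ((univ \ B).powerset : Set (Finset V)) := by
    intro P hP Q hQ h
    simp only [Finset.coe_powerset, Set.mem_preimage, Set.mem_powerset_iff, Finset.coe_subset] at hP hQ
    have hP' : Disjoint B P := Finset.disjoint_of_subset_right hP Finset.disjoint_sdiff
    have hQ' : Disjoint B Q := Finset.disjoint_of_subset_right hQ Finset.disjoint_sdiff
    have := congrArg (· \ B) h
    simpa [Finset.union_sdiff_cancel_left hP', Finset.union_sdiff_cancel_left hQ'] using this
  rw [h1, Finset.sum_image hinj]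
  have h2 : ∀ Q ∈ (univ \ B).powerset,
      p ^ #(B ∪ Q) * (1 - p) ^ (Fintype.card V - #(B ∪ Q))
        = p ^ #B * (p ^ #Q * (1 - p) ^ (#(univ \ B) - #Q)) := by
    intro Q hQ
    have hQ' : Disjoint B Q :=
      Finset.disjoint_of_subset_right (Finset.mem_powerset.1 hQ) Finset.disjoint_sdiff
    rw [Finset.card_union_of_disjoint hQ', Finset.card_sdiff_of_subset (Finset.subset_univ B),
      Finset.card_univ, pow_add, Nat.sub_sub, mul_assoc]
  rw [Finset.sum_congr rfl h2, ← Finset.mul_sum, Finset.sum_pow_mul_eq_add_pow]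
  simp

/-- The expected number of members of a `k`-uniform family contained in a `p`-random subset. -/
lemma sum_weight_mul_card {V : Type*} [Fintype V] [DecidableEq V] (p : ℝ) (k : ℕ)
    (𝓑 : Finset (Finset V)) (h𝓑 : ∀ B ∈ 𝓑, #B = k) :
    ∑ P : Finset V, p ^ #P * (1 - p) ^ (Fintype.card V - #P) * (#{B ∈ 𝓑 | B ⊆ P} : ℝ)
      = #𝓑 * p ^ k := by
  have h1 : ∀ P : Finset V,
      p ^ #P * (1 - p) ^ (Fintype.card V - #P) * (#{B ∈ 𝓑 | B ⊆ P} : ℝ)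
      = ∑ B ∈ 𝓑, if B ⊆ P then p ^ #P * (1 - p) ^ (Fintype.card V - #P) else 0 := by
    intro P
    rw [← Finset.sum_filter, Finset.sum_const, nsmul_eq_mul, mul_comm]
  rw [Finset.sum_congr rfl fun P _ => h1 P, Finset.sum_comm]
  have h2 : ∀ B ∈ 𝓑, (∑ P : Finset V,
      if B ⊆ P then p ^ #P * (1 - p) ^ (Fintype.card V - #P) else 0) = p ^ k := by
    intro B hB
    rw [← Finset.sum_filter, sum_weight_superset, h𝓑 B hB]
  rw [Finset.sum_congr rfl h2, Finset.sum_const, nsmul_eq_mul]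

/-- First-moment method: some outcome is at least as good as the expectation of the size of a
`p`-random subset minus a linear combination of the numbers of members of three uniform families
that it contains. -/
lemma exists_subset_of_moments {V : Type*} [Fintype V] [DecidableEq V]
    (p : ℝ) (hp0 : 0 ≤ p) (hp1 : p ≤ 1)
    (i j k : ℕ) (𝓐 𝓑 𝓒 : Finset (Finset V)) (h𝓐 : ∀ B ∈ 𝓐, #B = i)
    (h𝓑 : ∀ B ∈ 𝓑, #B = j) (h𝓒 : ∀ B ∈ 𝓒, #B = k) (α β γ : ℝ) :
    ∃ P : Finset V,
      Fintype.card V * p - α * (#𝓐 * p ^ i) - β * (#𝓑 * p ^ j) - γ * (#𝓒 * p ^ k) ≤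
        #P - α * #{B ∈ 𝓐 | B ⊆ P} - β * #{B ∈ 𝓑 | B ⊆ P} - γ * #{B ∈ 𝓒 | B ⊆ P} := by
  set w : Finset V → ℝ := fun P => p ^ #P * (1 - p) ^ (Fintype.card V - #P) with hw
  have hw0 : ∀ P, 0 ≤ w P := fun P =>
    mul_nonneg (pow_nonneg hp0 _) (pow_nonneg (sub_nonneg.2 hp1) _)
  have hw1 : ∑ P, w P = 1 := by
    have := sum_weight_superset p (∅ : Finset V)
    simpa using this
  have hcard : ∑ P, w P * (#P : ℝ) = Fintype.card V * p := by
    have := sum_weight_mul_card p 1 (powersetCard 1 (univ : Finset V))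
      (fun B hB => (Finset.mem_powersetCard.1 hB).2)
    rw [Finset.card_powersetCard, Nat.choose_one_right, Finset.card_univ, pow_one] at this
    rw [← this]
    refine Finset.sum_congr rfl fun P _ => ?_
    have : {B ∈ powersetCard 1 (univ : Finset V) | B ⊆ P} = powersetCard 1 P := by
      ext B
      simp [Finset.mem_powersetCard, and_comm]
    rw [this, Finset.card_powersetCard, Nat.choose_one_right]
  by_contra! hcon
  set M := Fintype.card V * p - α * (#𝓐 * p ^ i) - β * (#𝓑 * p ^ j) - γ * (#𝓒 * p ^ k) with hM
  have hlt : ∑ P, w P * (#P - α * #{B ∈ 𝓐 | B ⊆ P} - β * #{B ∈ 𝓑 | B ⊆ P}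
      - γ * #{B ∈ 𝓒 | B ⊆ P}) < ∑ P, w P * M := by
    refine Finset.sum_lt_sum (fun P _ => mul_le_mul_of_nonneg_left (hcon P).le (hw0 P)) ?_
    obtain ⟨P, -, hP⟩ : ∃ P ∈ (univ : Finset (Finset V)), 0 < w P := by
      by_contra! h
      have := Finset.sum_nonpos h
      linarith
    exact ⟨P, Finset.mem_univ _, mul_lt_mul_of_pos_left (hcon P) hP⟩
  rw [← Finset.sum_mul, hw1, one_mul] at hlt
  have heq : ∑ P, w P * (#P - α * #{B ∈ 𝓐 | B ⊆ P} - β * #{B ∈ 𝓑 | B ⊆ P}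
      - γ * #{B ∈ 𝓒 | B ⊆ P}) = M := by
    rw [hM, ← hcard, ← sum_weight_mul_card p i 𝓐 h𝓐, ← sum_weight_mul_card p j 𝓑 h𝓑,
      ← sum_weight_mul_card p k 𝓒 h𝓒, Finset.mul_sum, Finset.mul_sum, Finset.mul_sum,
      ← Finset.sum_sub_distrib, ← Finset.sum_sub_distrib, ← Finset.sum_sub_distrib]
    refine Finset.sum_congr rfl fun P _ => ?_
    simp only [hw]
    ring
  exact hlt.ne heq

/-! ### Counting independent sets -/

/-- The `k`-element subsets of `X` that are independent for the relation `adj`. -/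
noncomputable def indepSets {V : Type*} (adj : V → V → Prop) (k : ℕ) (X : Finset V) :
    Finset (Finset V) :=
  (powersetCard k X).filter fun I : Finset V => (I : Set V).Pairwise fun x y => ¬ adj x y

lemma mem_indepSets {V : Type*} {adj : V → V → Prop} {k : ℕ} {X I : Finset V} :
    I ∈ indepSets adj k X ↔
      (I ⊆ X ∧ #I = k) ∧ (I : Set V).Pairwise fun x y => ¬ adj x y := by
  rw [indepSets, Finset.mem_filter, Finset.mem_powersetCard]

/-- Kleitman–Winston bound. Suppose every subset of `U` with more than `R` elements has a vertex
adjacent to at least a proportion `β` of it. An independent set avoids such a vertex `v`, or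
contains `v` and avoids its neighbours; the second alternative shrinks `X` by a factor `1 - β`, so
it occurs at most `t` times before at most `R` vertices remain. The recursion
`N(X, k) ≤ N(X \ {v}, k) + N(X \ ({v} ∪ N(v)), k - 1)` gives the bound by induction on `#X`. -/
lemma card_independent_le {V : Type*} (adj : V → V → Prop) (U : Finset V) (R : ℕ) (hR : 1 ≤ R)
    (β : ℝ) (hβ1 : β ≤ 1)
    (hdeg : ∀ X ⊆ U, R < #X → ∃ v ∈ X, β * #X ≤ #{y ∈ X | y ≠ v ∧ adj v y}) :
    ∀ (n : ℕ) (X : Finset V), #X = n → X ⊆ U → ∀ t k : ℕ, (1 - β) ^ t * (#X : ℝ) ≤ R →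
      #(indepSets adj k X)
        ≤ (#X + 1) ^ t * R ^ k := by
  intro n
  induction n using Nat.strong_induction_on with
  | _ n ih =>
  intro X hXn hXU t k ht
  by_cases hX : #X ≤ R
  · calc #(indepSets adj k X)
        ≤ #(powersetCard k X) := Finset.card_filter_le _ _
      _ = (#X).choose k := Finset.card_powersetCard _ _
      _ ≤ (#X) ^ k := Nat.choose_le_pow _ _
      _ ≤ R ^ k := Nat.pow_le_pow_left hX k
      _ ≤ (#X + 1) ^ t * R ^ k := Nat.le_mul_of_pos_left _ (by positivity)
  push Not at hX
  obtain ⟨v, hvX, hv⟩ := hdeg X hXU hX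
  cases t with
  | zero =>
    exfalso
    have : (R : ℝ) < #X := by exact_mod_cast hX
    simp at ht
    omega
  | succ t =>
  cases k with
  | zero =>
    calc #(indepSets adj 0 X)
        ≤ #(powersetCard 0 X) := Finset.card_filter_le _ _
      _ = 1 := by simp
      _ ≤ _ := Nat.succ_le_of_lt (by positivity)
  | succ k =>
  set N := {y ∈ X | y ≠ v ∧ adj v y} with hN
  set Y := (X.erase v) \ N with hY
  have hYX : Y ⊆ X := Finset.sdiff_subset.trans (Finset.erase_subset _ _)
  have hNX : N ⊆ X := Finset.filter_subset _ _
  have hYcard : #Y < #X := Finset.card_lt_card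
    ⟨hYX, fun h => by simpa [hY] using h hvX⟩
  have hsub : (indepSets adj (k + 1) X) ⊆
      (indepSets adj (k + 1) (X.erase v)) ∪
      ((indepSets adj k Y)).image (insert v) := by
    intro I hI
    rw [mem_indepSets] at hI
    obtain ⟨⟨hIX, hIk⟩, hind⟩ := hI
    rw [Finset.mem_union]
    by_cases hvI : v ∈ I
    · right
      rw [Finset.mem_image]
      refine ⟨I.erase v, ?_, Finset.insert_erase hvI⟩
      rw [mem_indepSets]
      refine ⟨⟨?_, by rw [Finset.card_erase_of_mem hvI, hIk]; rfl⟩, ?_⟩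
      · intro y hy
        obtain ⟨hyv, hyI⟩ := Finset.mem_erase.1 hy
        rw [hY, Finset.mem_sdiff, Finset.mem_erase, hN, Finset.mem_filter]
        exact ⟨⟨hyv, hIX hyI⟩, fun h => hind hvI hyI hyv.symm h.2.2⟩
      · exact hind.mono (by exact_mod_cast Finset.erase_subset _ _)
    · left
      rw [mem_indepSets]
      refine ⟨⟨fun y hy => Finset.mem_erase.2 ⟨?_, hIX hy⟩, hIk⟩, hind⟩
      rintro rfl
      exact hvI hy
  have hb1 : 0 ≤ 1 - β := by linarith
  have herase : #(X.erase v) + 1 = #X := Finset.card_erase_add_one hvX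
  have ih1 := ih #(X.erase v) (by omega) (X.erase v) rfl ((Finset.erase_subset _ _).trans hXU)
    (t + 1) (k + 1) (le_trans (mul_le_mul_of_nonneg_left
      (by exact_mod_cast Finset.card_erase_le) (pow_nonneg hb1 _)) ht)
  have hYle : (#Y : ℝ) ≤ (1 - β) * #X := by
    have h1 : #Y ≤ #(X \ N) := Finset.card_le_card
      (Finset.sdiff_subset_sdiff (Finset.erase_subset _ _) le_rfl)
    have h2 : #(X \ N) + #N = #X := Finset.card_sdiff_add_card_eq_card hNX
    have h1' : (#Y : ℝ) ≤ #(X \ N) := by exact_mod_cast h1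
    have h2' : (#(X \ N) : ℝ) + #N = #X := by exact_mod_cast h2
    linarith
  have ih2 := ih #Y (by omega) Y rfl (hYX.trans hXU) t k (by
    refine le_trans (mul_le_mul_of_nonneg_left hYle (pow_nonneg hb1 _)) ?_
    rw [← mul_assoc, ← pow_succ]
    exact ht)
  rw [herase] at ih1
  calc _ ≤ _ := Finset.card_le_card hsub
    _ ≤ _ := Finset.card_union_le _ _
    _ ≤ (#X) ^ (t + 1) * R ^ (k + 1) + (#X) ^ t * R ^ (k + 1) := by
      refine add_le_add ih1 (Finset.card_image_le.trans (ih2.trans ?_))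
      exact Nat.mul_le_mul (Nat.pow_le_pow_left hYcard t) (Nat.pow_le_pow_right hR (by omega))
    _ = (#X) ^ t * (#X + 1) * R ^ (k + 1) := by ring
    _ ≤ (#X + 1) ^ t * (#X + 1) * R ^ (k + 1) := by gcongr; omega
    _ = _ := by ring

/-! ### Arcs and collinear sets in the plane -/

variable {F : Type*} [Field F]

/-- The slope of the line through `a` and `x`, with `none` for the vertical direction. The
degenerate value `dir a a` is `none`. -/
noncomputable def dir (a x : F × F) : Option F :=
  if x.1 = a.1 then none else some ((x.2 - a.2) / (x.1 - a.1))

lemma collinear_of_dir_eq {a x y : F × F} (h : dir a x = dir a y) :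
    Collinear F ({a, x, y} : Set (F × F)) := by
  rw [collinear_iff_of_mem (p₀ := a) (by simp)]
  unfold dir at h
  by_cases hx : x.1 = a.1
  · have hy : y.1 = a.1 := by
      by_contra hy
      simp [hx, hy] at h
    refine ⟨(0, 1), ?_⟩
    rintro p (rfl | rfl | rfl)
    · exact ⟨0, by simp⟩
    · exact ⟨p.2 - a.2, by ext <;> simp [hx]⟩
    · exact ⟨p.2 - a.2, by ext <;> simp [hy]⟩
  · have hy : y.1 ≠ a.1 := by
      intro hy
      simp [hx, hy] at h
    simp only [hx, hy, if_false, Option.some.injEq] at h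
    refine ⟨(1, (x.2 - a.2) / (x.1 - a.1)), ?_⟩
    have hx' := sub_ne_zero.2 hx
    have hy' := sub_ne_zero.2 hy
    rintro p (rfl | rfl | rfl)
    · exact ⟨0, by simp⟩
    · exact ⟨p.1 - a.1, by ext <;> simp; field_simp; ring⟩
    · exact ⟨p.1 - a.1, by rw [h]; ext <;> simp; field_simp; ring⟩

/-- A line through two given points meets an arc in at most two points. -/
lemma card_dir_eq_le_two {S : Finset (F × F)} (hS : IsArc F (S : Set (F × F))) {x y : F × F}
    (hxy : x ≠ y) : #{a ∈ S | dir a x = dir a y} ≤ 2 := by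
  by_contra! h
  obtain ⟨a, b, c, ha, hb, hc, hab, hac, hbc⟩ := Finset.two_lt_card_iff.1 h
  have key : ∀ d ∈ {a ∈ S | dir a x = dir a y}, d ∈ line[F, x, y] := fun d hd =>
    (collinear_of_dir_eq (Finset.mem_filter.1 hd).2).mem_affineSpan_of_mem_of_ne
      (by simp) (by simp) (by simp) hxy
  exact hS a (Finset.mem_filter.1 ha).1 b (Finset.mem_filter.1 hb).1 c (Finset.mem_filter.1 hc).1
    hab hac hbc (collinear_triple_of_mem_affineSpan_pair (key a ha) (key b hb) (key c hc))

variable [Fintype F]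

variable (F) in
/-- The `k`-element arcs of `F²`. -/
noncomputable def arcSets (k : ℕ) : Finset (Finset (F × F)) :=
  (powersetCard k univ).filter fun A : Finset (F × F) => IsArc F (A : Set (F × F))

variable (F) in
/-- The collinear `k`-element subsets of `F²`. -/
noncomputable def collinearSets (k : ℕ) : Finset (Finset (F × F)) :=
  (powersetCard k univ).filter fun B : Finset (F × F) => Collinear F (B : Set (F × F))

lemma mem_arcSets {k : ℕ} {A : Finset (F × F)} :
    A ∈ arcSets F k ↔ #A = k ∧ IsArc F (A : Set (F × F)) := by
  simp [arcSets]

lemma mem_collinearSets {k : ℕ} {B : Finset (F × F)} :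
    B ∈ collinearSets F k ↔ #B = k ∧ Collinear F (B : Set (F × F)) := by
  simp [collinearSets]


/-- Cauchy–Schwarz over the `q + 1` directions at `a`. -/
lemma sum_card_dir_ge (a : F × F) (X : Finset (F × F)) :
    #X ^ 2 ≤ (Fintype.card F + 1) * ∑ x ∈ X, #{y ∈ X | dir a x = dir a y} := by
  have h1 : #X = ∑ d : Option F, #{y ∈ X | dir a y = d} :=
    Finset.card_eq_sum_card_fiberwise (fun _ _ => Finset.mem_coe.2 (Finset.mem_univ _))
  have h2 : ∑ x ∈ X, #{y ∈ X | dir a x = dir a y} = ∑ d : Option F, #{y ∈ X | dir a y = d} ^ 2 := by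
    rw [← Finset.sum_fiberwise X (dir a)]
    refine Finset.sum_congr rfl fun d _ => ?_
    rw [sq, ← smul_eq_mul, ← Finset.sum_const]
    refine Finset.sum_congr rfl fun x hx => ?_
    rw [(Finset.mem_filter.1 hx).2]
    simp only [eq_comm]
  rw [h2]
  calc #X ^ 2 = (∑ d : Option F, #{y ∈ X | dir a y = d}) ^ 2 := by rw [← h1]
    _ ≤ #(univ : Finset (Option F)) * ∑ d : Option F, #{y ∈ X | dir a y = d} ^ 2 :=
      sq_sum_le_card_mul_sum_sq
    _ = _ := by rw [Finset.card_univ, Fintype.card_option]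

/-- The graph joining two points that are seen in the same direction from some point of the arc `S`
has, inside any set of more than `4q` points, a vertex adjacent to a proportion `#S / (8q)` of
that set. -/
lemma exists_large_degree {S : Finset (F × F)} (hS : IsArc F (S : Set (F × F)))
    {X : Finset (F × F)} (hX : 4 * Fintype.card F < #X) :
    ∃ v ∈ X, (#S : ℝ) / (8 * Fintype.card F) * #X ≤
      #{y ∈ X | y ≠ v ∧ ∃ a ∈ S, dir a v = dir a y} := by
  by_contra! hcon
  set q := Fintype.card F with hq
  have hq1 : (1 : ℝ) ≤ q := by exact_mod_cast Fintype.card_pos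
  have hXne : X.Nonempty := Finset.card_pos.1 (by omega)
  have hXR : 4 * (q : ℝ) < #X := by exact_mod_cast hX
  -- Triples `(a, x, y)` with `x ≠ y` in the same direction from `a` are counted in two ways;
  -- the diagonal `x = y` costs `#X`, which is at most half of the main term as `#X > 4q`.
  have hlow : ∀ a ∈ S, (#X : ℝ) ^ 2 / (4 * q) ≤
      ∑ x ∈ X, (#{y ∈ X | y ≠ x ∧ dir a x = dir a y} : ℝ) := by
    intro a _
    have h1 : (#X : ℝ) ^ 2 ≤ (q + 1) * ∑ x ∈ X, (#{y ∈ X | dir a x = dir a y} : ℝ) := by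
      exact_mod_cast sum_card_dir_ge a X
    have h2 : ∑ x ∈ X, (#{y ∈ X | dir a x = dir a y} : ℝ) =
        ∑ x ∈ X, (#{y ∈ X | y ≠ x ∧ dir a x = dir a y} : ℝ) + #X := by
      rw [Finset.cast_card (s := X), ← Finset.sum_add_distrib]
      refine Finset.sum_congr rfl fun x hx => ?_
      have : {y ∈ X | dir a x = dir a y} =
          insert x {y ∈ X | y ≠ x ∧ dir a x = dir a y} := by
        ext y
        by_cases hy : y = x
        · subst hy; simp [hx]
        · simp [hy]
      rw [this, Finset.card_insert_of_notMem (by simp)]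
      push_cast
      rfl
    rw [h2] at h1
    rw [div_le_iff₀ (by positivity)]
    set Z := ∑ x ∈ X, (#{y ∈ X | y ≠ x ∧ dir a x = dir a y} : ℝ)
    have hZ : 0 ≤ Z := Finset.sum_nonneg fun _ _ => by positivity
    nlinarith
  -- Each pair `x ≠ y` is counted for at most two points `a` of the arc.
  have hup : ∀ x ∈ X, ∑ a ∈ S, (#{y ∈ X | y ≠ x ∧ dir a x = dir a y} : ℝ) ≤
      2 * #{y ∈ X | y ≠ x ∧ ∃ a ∈ S, dir a x = dir a y} := by
    intro x _
    have h1 : ∑ a ∈ S, #{y ∈ X | y ≠ x ∧ dir a x = dir a y} =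
        ∑ y ∈ X, #{a ∈ S | y ≠ x ∧ dir a x = dir a y} :=
      Finset.sum_card_bipartiteAbove_eq_sum_card_bipartiteBelow
        (fun a y => y ≠ x ∧ dir a x = dir a y)
    have h2 : ∑ y ∈ X, #{a ∈ S | y ≠ x ∧ dir a x = dir a y} ≤
        2 * #{y ∈ X | y ≠ x ∧ ∃ a ∈ S, dir a x = dir a y} := by
      rw [Finset.card_filter, Finset.mul_sum]
      refine Finset.sum_le_sum fun y _ => ?_
      split_ifs with h
      · rw [mul_one]
        refine le_trans (Finset.card_le_card ?_) (card_dir_eq_le_two hS h.1.symm)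
        exact Finset.monotone_filter_right _ fun a _ h => h.2
      · rw [mul_zero, Nat.le_zero, Finset.card_eq_zero, Finset.filter_eq_empty_iff]
        exact fun a ha h' => h ⟨h'.1, a, ha, h'.2⟩
    exact_mod_cast h1.trans_le h2
  have hA : #S * ((#X : ℝ) ^ 2 / (4 * q)) ≤
      ∑ a ∈ S, ∑ x ∈ X, (#{y ∈ X | y ≠ x ∧ dir a x = dir a y} : ℝ) := by
    rw [← nsmul_eq_mul]
    exact Finset.card_nsmul_le_sum _ _ _ hlow
  rw [Finset.sum_comm] at hA
  have hB := Finset.sum_le_sum hup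
  have hC : ∑ x ∈ X, 2 * (#{y ∈ X | y ≠ x ∧ ∃ a ∈ S, dir a x = dir a y} : ℝ) <
      ∑ x ∈ X, 2 * ((#S : ℝ) / (8 * q) * #X) :=
    Finset.sum_lt_sum_of_nonempty hXne fun x hx => by linarith [hcon x hx]
  rw [Finset.sum_const, nsmul_eq_mul] at hC
  have : (#X : ℝ) * (2 * ((#S : ℝ) / (8 * q) * #X)) = #S * ((#X : ℝ) ^ 2 / (4 * q)) := by
    field_simp
    ring
  linarith

/-- An arc of size `s + k` consists of an arc `S` of size `s`, chosen in at most `(q²)^s` ways, and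
a `k`-set which is independent in the graph attached to `S`. -/
lemma card_arcs_le (s k t : ℕ) (hs : s ≤ 8 * Fintype.card F)
    (ht : (1 - (s : ℝ) / (8 * Fintype.card F)) ^ t * (Fintype.card F : ℝ) ^ 2
      ≤ 4 * Fintype.card F) :
    #(arcSets F (s + k)) ≤
      (Fintype.card F ^ 2 + 1) ^ (s + t) * (4 * Fintype.card F) ^ k := by
  set q := Fintype.card F with hq
  have hq1 : 1 ≤ q := Fintype.card_pos
  have hcard : Fintype.card (F × F) = q ^ 2 := by rw [Fintype.card_prod, sq]
  have hβ1 : (s : ℝ) / (8 * q) ≤ 1 := by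
    rw [div_le_one (by positivity)]
    exact_mod_cast hs
  set 𝓢 := arcSets F s with h𝓢
  let 𝓘 : Finset (F × F) → Finset (Finset (F × F)) := fun S =>
    indepSets (fun x y => ∃ a ∈ S, dir a x = dir a y) k (univ \ S)
  have hsub : (arcSets F (s + k)) ⊆
      𝓢.biUnion fun S => (𝓘 S).image (S ∪ ·) := by
    intro A hA
    rw [mem_arcSets] at hA
    obtain ⟨hAc, hArc⟩ := hA
    obtain ⟨S, hSA, hSc⟩ := Finset.exists_subset_card_eq (s := A) (n := s) (by omega)
    rw [Finset.mem_biUnion]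
    refine ⟨S, ?_, Finset.mem_image.2 ⟨A \ S, ?_, Finset.union_sdiff_of_subset hSA⟩⟩
    · rw [h𝓢, mem_arcSets]
      exact ⟨hSc,
        fun a ha b hb c hc => hArc a (hSA ha) b (hSA hb) c (hSA hc)⟩
    · simp only [𝓘, mem_indepSets]
      refine ⟨⟨Finset.sdiff_subset_sdiff (Finset.subset_univ _) le_rfl, ?_⟩, ?_⟩
      · rw [Finset.card_sdiff_of_subset hSA]; omega
      · rintro x hx y hy hxy ⟨a, ha, h⟩
        rw [Finset.mem_coe, Finset.mem_sdiff] at hx hy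
        refine hArc a (hSA ha) x hx.1 y hy.1 ?_ ?_ hxy (collinear_of_dir_eq h)
        · rintro rfl; exact hx.2 ha
        · rintro rfl; exact hy.2 ha
  have hI : ∀ S ∈ 𝓢, #((𝓘 S).image (S ∪ ·)) ≤ (q ^ 2 + 1) ^ t * (4 * q) ^ k := by
    intro S hS
    rw [h𝓢, mem_arcSets] at hS
    have hle : #(univ \ S) ≤ q ^ 2 := by
      rw [← hcard]; exact Finset.card_le_univ _
    have := card_independent_le (fun x y : F × F => ∃ a ∈ S, dir a x = dir a y) (univ \ S)
      (4 * q) (by omega) ((s : ℝ) / (8 * q)) hβ1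
      (fun X _ hX => by rw [← hS.1]; convert exists_large_degree hS.2 hX)
      _ (univ \ S) rfl le_rfl t k (by
        push_cast
        refine le_trans (mul_le_mul_of_nonneg_left (by exact_mod_cast hle)
          (pow_nonneg (by linarith) _)) ht)
    refine Finset.card_image_le.trans (this.trans ?_)
    gcongr
  calc _ ≤ _ := Finset.card_le_card hsub
    _ ≤ #𝓢 * ((q ^ 2 + 1) ^ t * (4 * q) ^ k) := Finset.card_biUnion_le_card_mul _ _ _ hI
    _ ≤ (q ^ 2 + 1) ^ s * ((q ^ 2 + 1) ^ t * (4 * q) ^ k) := by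
      gcongr
      calc #𝓢 ≤ #(powersetCard s (univ : Finset (F × F))) := Finset.card_filter_le _ _
        _ = (q ^ 2).choose s := by rw [Finset.card_powersetCard, Finset.card_univ, hcard]
        _ ≤ (q ^ 2) ^ s := Nat.choose_le_pow _ _
        _ ≤ (q ^ 2 + 1) ^ s := Nat.pow_le_pow_left (by omega) _
    _ = _ := by ring

/-- A collinear triple is given by two of its points and one parameter on the line they span. -/
lemma card_collinear_triples_le :
    #(collinearSets F 3) ≤
      Fintype.card F ^ 5 := by
  have hsub : (collinearSets F 3) ⊆
      (univ : Finset ((F × F) × (F × F) × F)).image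
        fun z => {z.1, z.2.1, AffineMap.lineMap z.1 z.2.1 z.2.2} := by
    intro B hB
    obtain ⟨hc, hcol⟩ := mem_collinearSets.1 hB
    obtain ⟨a, b, c, hab, -, -, rfl⟩ := Finset.card_eq_three.1 hc
    obtain ⟨r, hr⟩ := mem_affineSpan_pair_iff_exists_lineMap_eq.1
      (hcol.mem_affineSpan_of_mem_of_ne (p₁ := a) (p₂ := b) (p₃ := c)
        (by simp) (by simp) (by simp) hab)
    exact Finset.mem_image.2 ⟨(a, b, r), Finset.mem_univ _, by simp only [hr]⟩
  refine (Finset.card_le_card hsub).trans (Finset.card_image_le.trans ?_)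
  rw [Finset.card_univ]
  simp only [Fintype.card_prod]
  exact le_of_eq (by ring)

/-- A collinear quadruple is given by two of its points and two parameters on the line they
span. -/
lemma card_collinear_quadruples_le :
    #(collinearSets F 4) ≤
      Fintype.card F ^ 6 := by
  have hsub : (collinearSets F 4) ⊆
      (univ : Finset ((F × F) × (F × F) × F × F)).image
        fun z => {z.1, z.2.1, AffineMap.lineMap z.1 z.2.1 z.2.2.1,
          AffineMap.lineMap z.1 z.2.1 z.2.2.2} := by
    intro B hB
    obtain ⟨hc, hcol⟩ := mem_collinearSets.1 hB
    obtain ⟨a, B', ha, rfl, hc'⟩ := Finset.card_eq_succ.1 hc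
    obtain ⟨b, c, d, -, -, -, rfl⟩ := Finset.card_eq_three.1 hc'
    have hab : a ≠ b := by rintro rfl; simp at ha
    obtain ⟨r, hr⟩ := mem_affineSpan_pair_iff_exists_lineMap_eq.1
      (hcol.mem_affineSpan_of_mem_of_ne (p₁ := a) (p₂ := b) (p₃ := c)
        (by simp) (by simp) (by simp) hab)
    obtain ⟨u, hu⟩ := mem_affineSpan_pair_iff_exists_lineMap_eq.1
      (hcol.mem_affineSpan_of_mem_of_ne (p₁ := a) (p₂ := b) (p₃ := d)
        (by simp) (by simp) (by simp) hab)
    exact Finset.mem_image.2 ⟨(a, b, r, u), Finset.mem_univ _, by simp only [hr, hu]⟩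
  refine (Finset.card_le_card hsub).trans (Finset.card_image_le.trans ?_)
  rw [Finset.card_univ]
  simp only [Fintype.card_prod]
  exact le_of_eq (by ring)

end Aux

/-! ### Construction of the set -/

section Construction

open scoped Classical

/-- With `q = x³` and `p = 1 / (2x⁴)`, the bound of `card_arcs_le` for `t = s`, `k = 100 s` shows
that the expected number of arcs of size `101 s` is at most `q⁻²`. -/
lemma arc_weight_le_one {s : ℕ} (hs : 1 ≤ s) {x : ℝ} (hx : 4 ≤ x) :
    (x ^ 3) ^ 2 * ((((x ^ 3) ^ 2 + 1) ^ (s + s) * (4 * x ^ 3) ^ (100 * s)) *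
      (1 / (2 * x ^ 4)) ^ (s + 100 * s)) ≤ 1 := by
  have hx0 : 0 < x := by linarith
  have h1 : (1 : ℝ) ≤ x := by linarith
  have hA : (x ^ 3) ^ 2 ≤ ((x ^ 3) ^ 2) ^ s :=
    le_self_pow₀ (one_le_pow₀ (one_le_pow₀ h1)) (by omega)
  have hB : (x ^ 3) ^ 2 + 1 ≤ x ^ 9 := by
    have h2 : (1 : ℝ) ≤ x ^ 6 := one_le_pow₀ h1
    have h3 : (4 : ℝ) ≤ x ^ 3 := hx.trans (le_self_pow₀ h1 (by norm_num))
    nlinarith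
  have hC : (1 / (2 * x ^ 4)) ^ (s + 100 * s) * (4 * x ^ 3) ^ (100 * s) ≤
      ((2 / x) ^ 100) ^ s := by
    rw [pow_add, mul_assoc, ← mul_pow]
    have h2 : 1 / (2 * x ^ 4) * (4 * x ^ 3) = 2 / x := by
      field_simp
      norm_num
    rw [h2, ← pow_mul]
    refine mul_le_of_le_one_left (by positivity) (pow_le_one₀ (by positivity) ?_)
    rw [div_le_one (by positivity)]
    linarith [one_le_pow₀ h1 (n := 4)]
  have hD : x ^ 24 * (2 / x) ^ 100 ≤ 1 := by
    have h2 : (2 : ℝ) ^ 100 ≤ x ^ 50 :=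
      calc (2 : ℝ) ^ 100 = 4 ^ 50 := by norm_num
        _ ≤ x ^ 50 := by gcongr
    have h3 : x ^ 24 * x ^ 50 ≤ x ^ 100 := by
      rw [← pow_add]; exact pow_le_pow_right₀ h1 (by norm_num)
    rw [div_pow, ← mul_div_assoc, div_le_one (by positivity)]
    exact (mul_le_mul_of_nonneg_left h2 (by positivity)).trans h3
  calc _ = (x ^ 3) ^ 2 * ((x ^ 3) ^ 2 + 1) ^ (s + s) *
        ((1 / (2 * x ^ 4)) ^ (s + 100 * s) * (4 * x ^ 3) ^ (100 * s)) := by ring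
    _ ≤ ((x ^ 3) ^ 2) ^ s * (x ^ 9) ^ (s + s) * ((2 / x) ^ 100) ^ s := by gcongr
    _ = (x ^ 24 * (2 / x) ^ 100) ^ s := by
      rw [← two_mul, pow_mul (x ^ 9) 2 s, ← mul_pow, ← mul_pow]
      congr 1
      ring
    _ ≤ 1 := pow_le_one₀ (by positivity) hD

variable {F : Type*} [Field F]

/-- The hypothesis of `card_arcs_le` on `t` holds for `t = s` as soon as `s² ≥ 8 q log q`. -/
lemma one_sub_pow_mul_sq_le {q s : ℕ} (hq : 1 ≤ q) (hs : s ≤ 8 * q)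
    (hlog : 8 * q * Real.log q ≤ (s : ℝ) ^ 2) :
    (1 - (s : ℝ) / (8 * q)) ^ s * (q : ℝ) ^ 2 ≤ 4 * q := by
  have hq0 : (0 : ℝ) < q := by exact_mod_cast hq
  have hβ1 : (s : ℝ) / (8 * q) ≤ 1 := by
    rw [div_le_one (by positivity)]
    exact_mod_cast hs
  have h1 : (1 - (s : ℝ) / (8 * q)) ^ s ≤ 1 / q := by
    calc (1 - (s : ℝ) / (8 * q)) ^ s ≤ Real.exp (-((s : ℝ) / (8 * q))) ^ s :=
          pow_le_pow_left₀ (by linarith) (Real.one_sub_le_exp_neg _) _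
      _ = Real.exp (-((s : ℝ) ^ 2 / (8 * q))) := by
          rw [← Real.exp_nat_mul]; congr 1; ring
      _ ≤ Real.exp (-Real.log q) := by
          rw [Real.exp_le_exp, neg_le_neg_iff, le_div_iff₀ (by positivity)]
          linarith
      _ = 1 / q := by rw [Real.exp_neg, Real.exp_log hq0, one_div]
  calc _ ≤ 1 / (q : ℝ) * q ^ 2 := by gcongr
    _ = q := by field_simp
    _ ≤ 4 * q := by linarith

/-- Deleting one point from each collinear quadruple. -/
lemma exists_subset_noFourCollinear [Fintype F] (P : Finset (F × F)) :
    ∃ P' ⊆ P, NoLCollinear F 4 P' ∧ #P ≤ #P' + #{B ∈ collinearSets F 4 | B ⊆ P} := by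
  have hne : ∀ B ∈ {B ∈ collinearSets F 4 | B ⊆ P}, ∃ z, z ∈ B := by
    intro B hB
    have := (mem_collinearSets.1 (Finset.mem_filter.1 hB).1).1
    exact Finset.card_pos.1 (by omega)
  choose! f hf using hne
  refine ⟨P \ ({B ∈ collinearSets F 4 | B ⊆ P}).image f, Finset.sdiff_subset, ?_, ?_⟩
  · intro B hBP hB4 hBcol
    have hB : B ∈ {B ∈ collinearSets F 4 | B ⊆ P} :=
      Finset.mem_filter.2 ⟨mem_collinearSets.2 ⟨hB4, hBcol⟩, hBP.trans Finset.sdiff_subset⟩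
    exact (Finset.mem_sdiff.1 (hBP (hf B hB))).2 (Finset.mem_image_of_mem f hB)
  · have h1 := Finset.le_card_sdiff (({B ∈ collinearSets F 4 | B ⊆ P}).image f) P
    have h2 : #(({B ∈ collinearSets F 4 | B ⊆ P}).image f) ≤ _ := Finset.card_image_le
    omega

lemma numCollinearTriples_le [Fintype F] {P' P : Finset (F × F)} (h : P' ⊆ P) :
    numCollinearTriples F P' ≤ #{B ∈ collinearSets F 3 | B ⊆ P} := by
  rw [numCollinearTriples, Nat.card_eq_fintype_card, Fintype.card_subtype]
  refine Finset.card_le_card fun B hB => ?_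
  have hB' := (Finset.mem_filter.1 hB).2
  exact Finset.mem_filter.2 ⟨mem_collinearSets.2 hB'.2, hB'.1.trans h⟩

lemma maxArc_le_of_forall_not_subset [Fintype F] {P : Finset (F × F)} {m : ℕ}
    (h : ∀ A ∈ arcSets F m, ¬ A ⊆ P) : maxArc F P ≤ m := by
  refine csSup_le' ?_
  rintro k ⟨A, hAP, rfl, hA⟩
  by_contra! hlt
  obtain ⟨B, hBA, hBc⟩ := Finset.exists_subset_card_eq (s := A) (n := m) hlt.le
  exact h B (mem_arcSets.2 ⟨hBc, fun a ha b hb c hc => hA a (hBA ha) b (hBA hb) c (hBA hc)⟩)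
    (hBA.trans hAP)

/-- The construction for a fixed field, with `s` the size of the sub-arc used in counting arcs. -/
lemma exists_good_set [Fintype F] (s : ℕ) (hs1 : 1 ≤ s) (hs : s ≤ 8 * Fintype.card F)
    (hlog : 8 * Fintype.card F * Real.log (Fintype.card F) ≤ (s : ℝ) ^ 2)
    (hq : 64 ≤ Fintype.card F) :
    ∃ P : Finset (F × F),
      1 / 16 * (Fintype.card F : ℝ) ^ ((2 : ℝ) / 3) ≤ (#P : ℝ) ∧
      NoLCollinear F 4 P ∧ maxArc F P ≤ 101 * s ∧
      (numCollinearTriples F P : ℝ) ≤ 8 * (#P : ℝ) ^ ((3 : ℝ) / 2) := by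
  set q := Fintype.card F with hqdef
  have hq' : (64 : ℝ) ≤ q := by exact_mod_cast hq
  have hcard : Fintype.card (F × F) = q ^ 2 := by rw [Fintype.card_prod, sq]
  obtain ⟨x, hxq, hx4, hx2⟩ : ∃ x : ℝ, x ^ 3 = q ∧ 4 ≤ x ∧ (q : ℝ) ^ ((2 : ℝ) / 3) = x ^ 2 := by
    refine ⟨(q : ℝ) ^ ((1 : ℝ) / 3), ?_, ?_, ?_⟩
    · rw [← Real.rpow_natCast, ← Real.rpow_mul (by positivity)]; norm_num
    · calc (4 : ℝ) = ((4 : ℝ) ^ (3 : ℝ)) ^ ((1 : ℝ) / 3) := by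
            rw [← Real.rpow_mul (by norm_num)]; norm_num
        _ ≤ (q : ℝ) ^ ((1 : ℝ) / 3) :=
            Real.rpow_le_rpow (by positivity) (by norm_num; exact hq) (by norm_num)
    · rw [← Real.rpow_natCast, ← Real.rpow_mul (by positivity)]; norm_num
  have hx0 : 0 < x := by linarith
  have hp1 : 1 / (2 * x ^ 4) ≤ 1 := by
    rw [div_le_one (by positivity)]
    linarith [one_le_pow₀ (show (1 : ℝ) ≤ x by linarith) (n := 4)]
  -- Weight 2 on quadruples makes the deletion cost at most half of `P`; weight `q²` on arcs
  -- exceeds any possible gain in `#P`, so that a single arc is excluded.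
  obtain ⟨P, hP⟩ := exists_subset_of_moments (1 / (2 * x ^ 4)) (by positivity) hp1
    4 3 (s + 100 * s) (collinearSets F 4) (collinearSets F 3) (arcSets F (s + 100 * s))
    (fun B hB => (mem_collinearSets.1 hB).1) (fun B hB => (mem_collinearSets.1 hB).1)
    (fun B hB => (mem_arcSets.1 hB).1) 2 (1 / x) ((q : ℝ) ^ 2)
  have e1 : (Fintype.card (F × F) : ℝ) * (1 / (2 * x ^ 4)) = x ^ 2 / 2 := by
    rw [hcard]; push_cast; rw [← hxq]; field_simp
  have e2 : 2 * (#(collinearSets F 4) * (1 / (2 * x ^ 4)) ^ 4) ≤ x ^ 2 / 8 := by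
    have h : (#(collinearSets F 4) : ℝ) ≤ (x ^ 3) ^ 6 := by
      rw [hxq]; exact_mod_cast card_collinear_quadruples_le
    calc _ ≤ 2 * ((x ^ 3) ^ 6 * (1 / (2 * x ^ 4)) ^ 4) := by gcongr
      _ = x ^ 2 / 8 := by field_simp; norm_num
  have e3 : 1 / x * (#(collinearSets F 3) * (1 / (2 * x ^ 4)) ^ 3) ≤ x ^ 2 / 8 := by
    have h : (#(collinearSets F 3) : ℝ) ≤ (x ^ 3) ^ 5 := by
      rw [hxq]; exact_mod_cast card_collinear_triples_le
    calc _ ≤ 1 / x * ((x ^ 3) ^ 5 * (1 / (2 * x ^ 4)) ^ 3) := by gcongr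
      _ = x ^ 2 / 8 := by field_simp; norm_num
  have e4 : (q : ℝ) ^ 2 * (#(arcSets F (s + 100 * s)) * (1 / (2 * x ^ 4)) ^ (s + 100 * s)) ≤ 1 := by
    have h : (#(arcSets F (s + 100 * s)) : ℝ) ≤
        ((x ^ 3) ^ 2 + 1) ^ (s + s) * (4 * x ^ 3) ^ (100 * s) := by
      rw [hxq]
      exact_mod_cast card_arcs_le (F := F) s (100 * s) s hs
        (one_sub_pow_mul_sq_le (by omega) hs hlog)
    refine le_trans ?_ (arc_weight_le_one hs1 hx4)
    rw [← hxq]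
    gcongr
  set Q := #{B ∈ collinearSets F 4 | B ⊆ P}
  set T := #{B ∈ collinearSets F 3 | B ⊆ P}
  set A := #{B ∈ arcSets F (s + 100 * s) | B ⊆ P} with hAdef
  have hmain : x ^ 2 / 8 ≤ #P - 2 * Q - 1 / x * T - (q : ℝ) ^ 2 * A := by
    have hx16 : (16 : ℝ) ≤ x ^ 2 := by nlinarith
    rw [e1] at hP
    linarith
  have hT0 : 0 ≤ 1 / x * (T : ℝ) := by positivity
  have hQ0 : 0 ≤ (Q : ℝ) := by positivity
  have hA0 : A = 0 := by
    by_contra hA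
    have hA1 : (1 : ℝ) ≤ A := by exact_mod_cast Nat.one_le_iff_ne_zero.2 hA
    have hPq : (#P : ℝ) ≤ (q : ℝ) ^ 2 := by
      exact_mod_cast hcard ▸ Finset.card_le_univ P
    have : (q : ℝ) ^ 2 ≤ (q : ℝ) ^ 2 * A := le_mul_of_one_le_right (by positivity) hA1
    have : 0 < x ^ 2 := by positivity
    linarith
  rw [hA0, Nat.cast_zero, mul_zero, sub_zero] at hmain
  have hx2pos : 0 < x ^ 2 := by positivity
  obtain ⟨P', hsubP, hfour, hcardP⟩ := exists_subset_noFourCollinear P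
  have hcardR : (#P : ℝ) ≤ #P' + Q := by exact_mod_cast hcardP
  have hPP' : (#P : ℝ) ≤ 2 * #P' := by linarith
  have hsize : 1 / 16 * x ^ 2 ≤ (#P' : ℝ) := by linarith
  refine ⟨P', by rwa [hx2], hfour, ?_, ?_⟩
  · refine (maxArc_le_of_forall_not_subset (m := s + 100 * s) fun B hB hBP => ?_).trans (by omega)
    have := Finset.card_eq_zero.1 (hAdef.symm.trans hA0)
    exact Finset.filter_eq_empty_iff.1 this hB (hBP.trans hsubP)
  · have hT : (T : ℝ) ≤ x * #P := by
      have : 1 / x * (T : ℝ) ≤ #P := by linarith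
      rw [one_div, inv_mul_le_iff₀ hx0] at this
      exact this
    have hsqrt : x ≤ 4 * √(#P' : ℝ) := by
      have : x / 4 ≤ √(#P' : ℝ) := Real.le_sqrt_of_sq_le (by linarith [hsize, div_pow x 4 2])
      linarith
    have hpow : (#P' : ℝ) ^ ((3 : ℝ) / 2) = √(#P' : ℝ) * #P' := by
      rw [show (3 : ℝ) / 2 = 1 / 2 + 1 by norm_num, Real.rpow_add_one' (by positivity) (by norm_num),
        Real.sqrt_eq_rpow]
    calc (numCollinearTriples F P' : ℝ) ≤ T := by exact_mod_cast numCollinearTriples_le hsubP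
      _ ≤ x * (2 * #P') := hT.trans (by gcongr)
      _ ≤ 4 * √(#P' : ℝ) * (2 * #P') := by gcongr
      _ = 8 * (#P' : ℝ) ^ ((3 : ℝ) / 2) := by rw [hpow]; ring

end Construction

/-- For large `q`, the choice `s = ⌈q^{1/2} log q⌉` meets all numerical requirements. -/
lemma eventually_exists_scale (δ : ℝ) (hδ : 0 < δ) :
    ∀ᶠ q : ℕ in Filter.atTop, ∃ s : ℕ, 1 ≤ s ∧ s ≤ 8 * q ∧
      8 * q * Real.log q ≤ (s : ℝ) ^ 2 ∧
      101 * (s : ℝ) ≤ (1 / 16 * (q : ℝ) ^ ((2 : ℝ) / 3)) ^ ((3 : ℝ) / 4 + δ) := by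
  set κ : ℝ := (1 / 16 : ℝ) ^ ((3 : ℝ) / 4 + δ) / 202 with hκ
  have hκ0 : 0 < κ := by positivity
  have h1 : ∀ᶠ y : ℝ in Filter.atTop, 8 ≤ Real.log y :=
    Real.tendsto_log_atTop.eventually_ge_atTop 8
  have h2 : ∀ᶠ y : ℝ in Filter.atTop, ‖Real.log y‖ ≤ 1 * ‖y ^ ((1 : ℝ) / 2)‖ :=
    (isLittleO_log_rpow_atTop (by norm_num)).bound one_pos
  have h3 : ∀ᶠ y : ℝ in Filter.atTop, ‖Real.log y‖ ≤ κ * ‖y ^ (2 * δ / 3)‖ :=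
    (isLittleO_log_rpow_atTop (by positivity)).bound hκ0
  filter_upwards [tendsto_natCast_atTop_atTop.eventually h1,
    tendsto_natCast_atTop_atTop.eventually h2, tendsto_natCast_atTop_atTop.eventually h3,
    Filter.eventually_ge_atTop 1] with q hlog8 hhalf hδ' hq1
  have hq0 : (1 : ℝ) ≤ q := by exact_mod_cast hq1
  rw [Real.norm_of_nonneg (by linarith), Real.norm_of_nonneg (by positivity)] at hhalf hδ'
  set r : ℝ := (q : ℝ) ^ ((1 : ℝ) / 2) with hr
  set L : ℝ := Real.log q
  have hr1 : 1 ≤ r := Real.one_le_rpow hq0 (by norm_num)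
  have hrr : r * r = q := by
    rw [hr, ← Real.rpow_add (by positivity)]; norm_num
  have hlow : r * L ≤ (⌈r * L⌉₊ : ℝ) := Nat.le_ceil _
  have hupp : (⌈r * L⌉₊ : ℝ) ≤ 2 * (r * L) := by
    have := (Nat.ceil_lt_add_one (show 0 ≤ r * L by positivity)).le
    nlinarith
  refine ⟨⌈r * L⌉₊, Nat.ceil_pos.2 (by positivity), ?_, ?_, ?_⟩
  · have : (⌈r * L⌉₊ : ℝ) ≤ 8 * q := by nlinarith
    exact_mod_cast this
  · calc 8 * (q : ℝ) * L ≤ q * (L * L) := by rw [mul_assoc, mul_left_comm]; gcongr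
      _ = (r * L) ^ 2 := by rw [← hrr]; ring
      _ ≤ _ := by gcongr
  · calc 101 * (⌈r * L⌉₊ : ℝ) ≤ 202 * r * L := by linarith
      _ ≤ 202 * r * (κ * (q : ℝ) ^ (2 * δ / 3)) := by gcongr
      _ = (1 / 16 : ℝ) ^ ((3 : ℝ) / 4 + δ) * (r * (q : ℝ) ^ (2 * δ / 3)) := by
        rw [hκ]; ring
      _ = _ := by
        rw [Real.mul_rpow (by norm_num) (by positivity), ← Real.rpow_mul (by positivity), hr,
          ← Real.rpow_add (by positivity)]
        ring_nf

theorem balogh_solymosi_analogue_strong :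
    ∀ δ : ℝ, 0 < δ → ∃ c C : ℝ, 0 < c ∧ 0 < C ∧ ∃ q₀ : ℕ,
      ∀ (F : Type) [Field F] [Fintype F], q₀ ≤ Fintype.card F →
      ∃ P : Finset (F × F),
        c * (Fintype.card F : ℝ) ^ ((2 : ℝ) / 3) ≤ (P.card : ℝ) ∧
        NoLCollinear F 4 P ∧
        (maxArc F P : ℝ) ≤ (P.card : ℝ) ^ ((3 : ℝ) / 4 + δ) ∧
        (numCollinearTriples F P : ℝ) ≤ C * (P.card : ℝ) ^ ((3 : ℝ) / 2) := by
  intro δ hδ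
  obtain ⟨q₁, hq₁⟩ := Filter.eventually_atTop.1 (eventually_exists_scale δ hδ)
  refine ⟨1 / 16, 8, by norm_num, by norm_num, max q₁ 64, fun F _ _ hF => ?_⟩
  obtain ⟨s, hs1, hs8, hlog, hsP⟩ := hq₁ (Fintype.card F) ((le_max_left _ _).trans hF)
  obtain ⟨P, hsize, h4, harc, hT⟩ :=
    exists_good_set (F := F) s hs1 hs8 hlog ((le_max_right _ _).trans hF)
  refine ⟨P, hsize, h4, ?_, hT⟩
  calc (maxArc F P : ℝ) ≤ 101 * s := by exact_mod_cast harc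
    _ ≤ _ := hsP
    _ ≤ _ := Real.rpow_le_rpow (by positivity) hsize (by positivity)
end

section
/- For every real K > 0 there exists a constant c > 0 such that for every finite field F and every finite nonempty subset P ⊆ F² with T(P) ≤ K · |P|^{3/2}, one has a(P) ≥ c · |P|^{3/4}. -/
/-!
The proof is the deletion method. Write `n = |P|` and include each point of `P` in a random set `S`
independently with probability `p = c₀ n^{-1/4}`. The expectation of `|S|` minus the number of
collinear triples inside `S` is `p n - p³ T(P) ≥ c₀ n^{3/4} (1 - c₀² K)`, which is at least
`(c₀ / 2) n^{3/4}` for `c₀ = 1 / (1 + 2 K)`. Removing one point of each collinear triple from an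
outcome `S` that attains the expectation leaves an arc.

The random set is encoded by the weights `p^|S| (1 - p)^(|P| - |S|)` on the subsets `S` of `P`:
`sum_weight_superset` says that a fixed `e ⊆ P` lies in `S` with probability `p^|e|`,
`exists_subset_few_edges` is the expectation argument, and `exists_large_independent` the deletion.
-/

open Finset MeasureTheory
open scoped NNReal ENNReal

/-- A `p`-random subset of `P` contains a fixed `e ⊆ P` with probability `p ^ |e|`. -/
lemma sum_weight_superset_s17 {α : Type*} [DecidableEq α] (p : ℝ) {e P : Finset α} (he : e ⊆ P) :
    ∑ S ∈ P.powerset, (if e ⊆ S then p ^ S.card * (1 - p) ^ (P.card - S.card) else 0)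
      = p ^ e.card := by
  rw [← Finset.sum_filter]
  have h1 : P.powerset.filter (fun S => e ⊆ S) = (P \ e).powerset.image (e ∪ ·) := by
    rw [← Finset.Icc_eq_image_powerset he]
    ext S
    simp [and_comm]
  have hdisj : ∀ U ∈ (P \ e).powerset, Disjoint e U := fun U hU =>
    Finset.disjoint_of_subset_right (Finset.mem_powerset.1 hU) Finset.disjoint_sdiff
  rw [h1, Finset.sum_image]
  · have h2 : ∀ U ∈ (P \ e).powerset,
        p ^ (e ∪ U).card * (1 - p) ^ (P.card - (e ∪ U).card)
          = p ^ e.card * (p ^ U.card * (1 - p) ^ ((P \ e).card - U.card)) := by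
      intro U hU
      rw [Finset.card_union_of_disjoint (hdisj U hU), Finset.card_sdiff_of_subset he, pow_add,
        Nat.sub_sub, mul_assoc]
    rw [Finset.sum_congr rfl h2, ← Finset.mul_sum, Finset.sum_pow_mul_eq_add_pow]
    simp
  · intro U hU V hV hUV
    have hUV' : e ∪ U = e ∪ V := hUV
    rw [← Finset.union_sdiff_cancel_left (hdisj U hU), hUV',
      Finset.union_sdiff_cancel_left (hdisj V hV)]

/-- Some subset `S` of `P` attains the expectation of `|S|` minus the number of members of `E`
inside `S`. -/
lemma exists_subset_few_edges {α : Type*} [DecidableEq α] (p : ℝ) (hp0 : 0 ≤ p) (hp1 : p ≤ 1)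
    (P : Finset α) (E : Finset (Finset α)) (hE : ∀ e ∈ E, e ⊆ P ∧ e.card = 3) :
    ∃ S ⊆ P, p * P.card - p ^ 3 * E.card ≤ (S.card : ℝ) - (E.filter (· ⊆ S)).card := by
  let w : Finset α → ℝ := fun S => p ^ S.card * (1 - p) ^ (P.card - S.card)
  have hw : ∀ S, 0 ≤ w S := fun S =>
    mul_nonneg (pow_nonneg hp0 _) (pow_nonneg (sub_nonneg.2 hp1) _)
  have hw1 : ∑ S ∈ P.powerset, w S = 1 := by
    simp only [w]
    rw [Finset.sum_pow_mul_eq_add_pow]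
    simp
  have hpts : ∑ S ∈ P.powerset, w S * S.card = p * P.card := by
    have h : ∀ S ∈ P.powerset, w S * S.card = ∑ x ∈ P, if {x} ⊆ S then w S else 0 := by
      intro S hS
      have hf : P.filter (· ∈ S) = S :=
        Finset.filter_mem_eq_inter.trans (Finset.inter_eq_right.2 (Finset.mem_powerset.1 hS))
      simp only [Finset.singleton_subset_iff]
      rw [← Finset.sum_filter, hf]
      simp [mul_comm]
    rw [Finset.sum_congr rfl h, Finset.sum_comm,
      Finset.sum_congr rfl fun x hx =>
        sum_weight_superset_s17 p (Finset.singleton_subset_iff.2 hx)]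
    simp [mul_comm]
  have hedges : ∑ S ∈ P.powerset, w S * (E.filter (· ⊆ S)).card = p ^ 3 * E.card := by
    have h : ∀ S ∈ P.powerset, w S * (E.filter (· ⊆ S)).card
        = ∑ e ∈ E, if e ⊆ S then w S else 0 := by
      intro S _
      rw [← Finset.sum_filter]
      simp [mul_comm]
    rw [Finset.sum_congr rfl h, Finset.sum_comm,
      Finset.sum_congr rfl fun e he =>
        (sum_weight_superset_s17 p (hE e he).1).trans (by rw [(hE e he).2])]
    simp [mul_comm]
  by_contra! hcon
  have hle : ∀ S ∈ P.powerset, w S * ((S.card : ℝ) - (E.filter (· ⊆ S)).card)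
      ≤ w S * (p * P.card - p ^ 3 * E.card) := fun S hS =>
    mul_le_mul_of_nonneg_left (hcon S (Finset.mem_powerset.1 hS)).le (hw S)
  -- The weights sum to `1`, so one of them is positive, which makes the inequality strict.
  obtain ⟨S₀, hS₀, hpos⟩ : ∃ S ∈ P.powerset, 0 < w S := by
    by_contra! hn
    linarith [Finset.sum_nonpos hn]
  have hlt := Finset.sum_lt_sum hle
    ⟨S₀, hS₀, mul_lt_mul_of_pos_left (hcon S₀ (Finset.mem_powerset.1 hS₀)) hpos⟩
  rw [← Finset.sum_mul, hw1] at hlt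
  simp only [mul_sub, Finset.sum_sub_distrib] at hlt
  rw [hpts, hedges] at hlt
  linarith

/-- A 3-uniform hypergraph `E` on `P` has an independent set of size at least
`p |P| - p³ |E|`, for every `p ∈ [0, 1]`. -/
lemma exists_large_independent {α : Type*} [DecidableEq α] (p : ℝ) (hp0 : 0 ≤ p) (hp1 : p ≤ 1)
    (P : Finset α) (E : Finset (Finset α)) (hE : ∀ e ∈ E, e ⊆ P ∧ e.card = 3) :
    ∃ A ⊆ P, (∀ e ∈ E, ¬ e ⊆ A) ∧ p * P.card - p ^ 3 * E.card ≤ (A.card : ℝ) := by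
  obtain ⟨S, hSP, hS⟩ := exists_subset_few_edges p hp0 hp1 P E hE
  have hne : ∀ e : {e // e ∈ E.filter (· ⊆ S)}, ∃ x, x ∈ e.1 := fun e =>
    Finset.card_pos.1 (by rw [(hE e.1 (Finset.mem_filter.1 e.2).1).2]; norm_num)
  choose f hf using hne
  let D : Finset α := (E.filter (· ⊆ S)).attach.image f
  have hD : D.card ≤ (E.filter (· ⊆ S)).card :=
    Finset.card_image_le.trans Finset.card_attach.le
  refine ⟨S \ D, Finset.sdiff_subset.trans hSP, ?_, ?_⟩
  · intro e he hsub
    have heS : e ∈ E.filter (· ⊆ S) :=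
      Finset.mem_filter.2 ⟨he, hsub.trans Finset.sdiff_subset⟩
    exact (Finset.mem_sdiff.1 (hsub (hf ⟨e, heS⟩))).2
      (Finset.mem_image_of_mem f (Finset.mem_attach _ _))
  · have h1 : S.card ≤ (S \ D).card + D.card := by
      have := Finset.le_card_sdiff D S
      omega
    have h2 : (S.card : ℝ) ≤ (S \ D).card + (E.filter (· ⊆ S)).card := by
      exact_mod_cast h1.trans (Nat.add_le_add_left hD _)
    linarith

theorem arc_from_few_triples_polynomial :
    ∀ K : ℝ, 0 < K → ∃ c : ℝ, 0 < c ∧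
      ∀ (F : Type) [Field F], ∀ P : Finset (F × F), P.Nonempty →
      (numCollinearTriples F P : ℝ) ≤ K * (P.card : ℝ) ^ ((3 : ℝ) / 2) →
      c * (P.card : ℝ) ^ ((3 : ℝ) / 4) ≤ (maxArc F P : ℝ) := by
  classical
  intro K hK
  let c₀ : ℝ := 1 / (1 + 2 * K)
  have hc0 : 0 < c₀ := by positivity
  have hc1 : c₀ ≤ 1 := by
    rw [div_le_one (by positivity)]; linarith
  have hcK : c₀ ^ 2 * K ≤ 1 / 2 := by
    have h : c₀ * (1 + 2 * K) = 1 := by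
      simp only [c₀]; field_simp
    nlinarith
  refine ⟨c₀ / 2, by positivity, ?_⟩
  intro F _ P hP hT
  let E : Finset (Finset (F × F)) :=
    P.powerset.filter fun s => s.card = 3 ∧ Collinear F (↑s : Set (F × F))
  have hEcard : numCollinearTriples F P = E.card := by
    exact Nat.subtype_card E fun s => by simp [E]
  -- In terms of `x = n^{1/4}` every exponent is an integer, and `p = c₀ / x`.
  obtain ⟨x, hx⟩ : ∃ x : ℝ, x = (P.card : ℝ) ^ ((1 : ℝ) / 4) := ⟨_, rfl⟩
  have hn : (1 : ℝ) ≤ P.card := by exact_mod_cast hP.card_pos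
  have hn0 : (0 : ℝ) ≤ P.card := zero_le_one.trans hn
  have hx1 : 1 ≤ x := hx ▸ Real.one_le_rpow hn (by norm_num)
  have hx0 : 0 < x := zero_lt_one.trans_le hx1
  have hx3 : (P.card : ℝ) ^ ((3 : ℝ) / 4) = x ^ 3 := by
    rw [hx, ← Real.rpow_mul_natCast hn0]; norm_num
  have hx4 : (P.card : ℝ) = x ^ 4 := by
    rw [hx, ← Real.rpow_mul_natCast hn0]; norm_num
  have hx6 : (P.card : ℝ) ^ ((3 : ℝ) / 2) = x ^ 6 := by
    rw [hx, ← Real.rpow_mul_natCast hn0]; norm_num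
  obtain ⟨A, hAP, hAE, hA⟩ := exists_large_independent (c₀ / x) (div_pos hc0 hx0).le
    ((div_le_one hx0).2 (hc1.trans hx1)) P E
    (fun e he => ⟨Finset.mem_powerset.1 (Finset.mem_filter.1 he).1, (Finset.mem_filter.1 he).2.1⟩)
  have hArc : IsArc F (↑A : Set (F × F)) := by
    intro a ha b hb c hc hab hac hbc hcol
    have hsub : ({a, b, c} : Finset (F × F)) ⊆ A := by
      intro y hy
      simp only [Finset.mem_insert, Finset.mem_singleton] at hy
      rcases hy with rfl | rfl | rfl <;> assumption
    refine hAE {a, b, c} (Finset.mem_filter.2 ⟨Finset.mem_powerset.2 (hsub.trans hAP),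
      Finset.card_eq_three.2 ⟨a, b, c, hab, hac, hbc, rfl⟩, ?_⟩) hsub
    simpa using hcol
  have hmax : A.card ≤ maxArc F P := by
    refine le_csSup ⟨P.card, ?_⟩ ⟨A, hAP, rfl, hArc⟩
    rintro k ⟨s, hs, rfl, -⟩
    exact Finset.card_le_card hs
  have hmax' : (A.card : ℝ) ≤ maxArc F P := by exact_mod_cast hmax
  rw [hEcard, hx6] at hT
  rw [hx3]
  refine le_trans ?_ (hA.trans hmax')
  calc c₀ / 2 * x ^ 3 ≤ c₀ * x ^ 3 * (1 - c₀ ^ 2 * K) := by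
        have : 0 ≤ c₀ * x ^ 3 := (mul_pos hc0 (pow_pos hx0 3)).le
        nlinarith
    _ = c₀ / x * x ^ 4 - (c₀ / x) ^ 3 * (K * x ^ 6) := by field_simp
    _ ≤ c₀ / x * P.card - (c₀ / x) ^ 3 * E.card := by
        have hp3 : 0 ≤ (c₀ / x) ^ 3 := (pow_pos (div_pos hc0 hx0) 3).le
        rw [← hx4]
        exact sub_le_sub_left (mul_le_mul_of_nonneg_left hT hp3) _
end
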